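/- arXiv:2101.06726 — 2 statements merged into one kernel-verified Lean document; each statement's English description precedes it below -/
import Mathlib

section
/- For an arbitrary prime power q and any divisor t of q−1, every vertex of the graph G(q,t) has at least q−1 neighbors; more precisely, the number of vertices adjacent to any given vertex is either q or q−1. -/
/-- The scaling relation by the subgroup `H ≤ Fˣ` on nonzero pairs of field elements:
`(a₁,b₁) ∼ (a₂,b₂)` iff there is `h ∈ H` with `a₁ = h·a₂` and `b₁ = h·b₂`. -/
def Grel {F : Type} [Field F] (H : Subgroup Fˣ) (p p' : {p : F × F // p ≠ 0}) : Prop :=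
  ∃ h ∈ H, p.1.1 = (h : F) * p'.1.1 ∧ p.1.2 = (h : F) * p'.1.2

/-- The vertex set of the graph `G(q,t)`: nonzero pairs modulo scaling by `H`. -/
def GVertex (F : Type) [Field F] (H : Subgroup Fˣ) : Type :=
  Quot (Grel H)

/-- Membership of a field element in the subgroup `H ≤ Fˣ`. -/
def memH {F : Type} [Field F] (H : Subgroup Fˣ) (x : F) : Prop :=
  ∃ h ∈ H, (h : F) = x

/-- Adjacency in the graph `G(q,t)`: `⟨a,b⟩` and `⟨x,y⟩` are adjacent iff `a·x + b·y ∈ H`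
(this condition is independent of the chosen representatives). -/
def GAdj {F : Type} [Field F] (H : Subgroup Fˣ) (u v : GVertex F H) : Prop :=
  ∃ p p' : {p : F × F // p ≠ 0},
    u = Quot.mk (Grel H) p ∧ v = Quot.mk (Grel H) p' ∧
      memH H (p.1.1 * p'.1.1 + p.1.2 * p'.1.2)

/-!
Fix a vertex `⟨a, b⟩`. Scaling `(x, y)` by `h ∈ H` scales `a * x + b * y` by `h`, so every neighbor
has exactly one representative with `a * x + b * y = 1`. The neighbors are thus in bijection with
the points of an affine line over `F`.
-/

open scoped Cardinal

theorem nonempty_preimage_singleton_equiv_of_finrank_eq_succ {K V : Type*} [Field K]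
    [AddCommGroup V] [Module K V] {n : ℕ} (hV : Module.finrank K V = n + 1)
    {f : V →ₗ[K] K} (hf : f ≠ 0) (c : K) : Nonempty (f ⁻¹' {c} ≃ (Fin n → K)) := by
  have : FiniteDimensional K V := Module.finite_of_finrank_eq_succ hV
  have hker : Module.finrank K (LinearMap.ker f) = n := by
    have := Module.Dual.finrank_ker_add_one_of_ne_zero hf
    omega
  have hsurj : Function.Surjective f.toAddMonoidHom := LinearMap.surjective hf
  let fiberEquivKer : f ⁻¹' {c} ≃ LinearMap.ker f :=
    AddMonoidHom.fiberEquivKerOfSurjective hsurj c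
  let kerEquivPi : LinearMap.ker f ≃ₗ[K] (Fin n → K) := LinearEquiv.ofFinrankEq _ _ (by simp [hker])
  exact ⟨fiberEquivKer.trans kerEquivPi.toEquiv⟩

section DotForm

variable {R : Type*} [CommSemiring R]

/-- The dot product `a * x + b * y` on `R × R`, bundled as a bilinear form so that adjacency in
`G(q,t)` reads `dotForm F p p' ∈ H`. -/
def dotForm (R : Type*) [CommSemiring R] : LinearMap.BilinForm R (R × R) :=
  (LinearMap.mul R R).compl₁₂ (.fst R R R) (.fst R R R) +
    (LinearMap.mul R R).compl₁₂ (.snd R R R) (.snd R R R)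

theorem dotForm_apply (p p' : R × R) :
    dotForm R p p' = p.1 * p'.1 + p.2 * p'.2 :=
  rfl

theorem dotForm_ne_zero {p : R × R} (hp : p ≠ 0) : dotForm R p ≠ 0 := by
  contrapose! hp
  ext
  · simpa [dotForm_apply] using LinearMap.congr_fun hp (1, 0)
  · simpa [dotForm_apply] using LinearMap.congr_fun hp (0, 1)

theorem ne_zero_of_dotForm_eq_one [Nontrivial R] {p r : R × R} (hr : dotForm R p r = 1) :
    r ≠ 0 := by
  rintro rfl
  simp at hr

end DotForm

section Graph

variable {F : Type} [Field F] {H : Subgroup Fˣ}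

theorem grel_iff_exists_smul {p p' : {p : F × F // p ≠ 0}} :
    Grel H p p' ↔ ∃ h ∈ H, p.1 = h • p'.1 := by
  simp [Grel, Prod.ext_iff, Units.smul_def]

theorem grel_equivalence (H : Subgroup Fˣ) : Equivalence (Grel H) := by
  have horbit : Grel H = (MulAction.orbitRel H (F × F)).comap Subtype.val := by
    ext p p'
    simp [grel_iff_exists_smul, Setoid.comap_rel, MulAction.orbitRel_apply,
      MulAction.mem_orbit_iff, Subgroup.smul_def, eq_comm]
  rw [horbit]
  exact ((MulAction.orbitRel H (F × F)).comap Subtype.val).iseqv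

theorem quot_mk_grel_eq_iff {p p' : {p : F × F // p ≠ 0}} :
    Quot.mk (Grel H) p = Quot.mk (Grel H) p' ↔ Grel H p p' :=
  (grel_equivalence H).quot_mk_eq_iff p p'

theorem memH_smul_iff {h : Fˣ} (hh : h ∈ H) {x : F} : memH H (h • x) ↔ memH H x := by
  constructor
  · rintro ⟨k, hk, hkx⟩
    exact ⟨h⁻¹ * k, H.mul_mem (H.inv_mem hh) hk, by simp [hkx, Units.smul_def]⟩
  · rintro ⟨k, hk, rfl⟩
    exact ⟨h * k, H.mul_mem hh hk, by simp [Units.smul_def]⟩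

theorem gAdj_mk_mk_iff {p p' : {p : F × F // p ≠ 0}} :
    GAdj H (Quot.mk _ p) (Quot.mk _ p') ↔ memH H (dotForm F p p') := by
  refine ⟨?_, fun hpp' => ⟨p, p', rfl, rfl, hpp'⟩⟩
  rintro ⟨r, r', hpr, hpr', hrr'⟩
  obtain ⟨h, hh, hp⟩ := grel_iff_exists_smul.mp (quot_mk_grel_eq_iff.mp hpr)
  obtain ⟨k, hk, hp'⟩ := grel_iff_exists_smul.mp (quot_mk_grel_eq_iff.mp hpr')
  have hsmul : dotForm F p p' = h • k • dotForm F r r' := by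
    simp [hp, hp', Units.smul_def, mul_left_comm]
  rw [hsmul, memH_smul_iff hh, memH_smul_iff hk]
  exact hrr'

/-- The vertex represented by a point `r` of the affine line `dotForm F p r = 1`; such vertices are
the neighbors of the class of `p`. -/
def normalizedVertex (H : Subgroup Fˣ) (p : F × F) (r : dotForm F p ⁻¹' {1}) : GVertex F H :=
  Quot.mk _ ⟨r, ne_zero_of_dotForm_eq_one r.2⟩

theorem normalizedVertex_injective (p : F × F) : Function.Injective (normalizedVertex H p) := by
  rintro ⟨r, hr⟩ ⟨r', hr'⟩ hrr'
  obtain ⟨h, -, rfl⟩ : ∃ h ∈ H, r = h • r' :=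
    grel_iff_exists_smul.mp (quot_mk_grel_eq_iff.mp hrr')
  have hh : h = 1 := by
    simp only [Set.mem_preimage, Set.mem_singleton_iff] at hr hr'
    simpa [Units.smul_def, hr'] using hr
  simp [hh]

theorem range_normalizedVertex (p : {p : F × F // p ≠ 0}) :
    Set.range (normalizedVertex H p) = {w : GVertex F H | GAdj H (Quot.mk _ p) w} := by
  ext w
  constructor
  · rintro ⟨⟨r, hr⟩, rfl⟩
    exact gAdj_mk_mk_iff.mpr ⟨1, H.one_mem, hr.symm⟩
  · obtain ⟨r, rfl⟩ := Quot.exists_rep w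
    intro hadj
    obtain ⟨k, hk, hkr⟩ := gAdj_mk_mk_iff.mp hadj
    have hline : dotForm F p (k⁻¹ • r.1) = 1 := by
      simp [Units.smul_def, ← hkr]
    exact ⟨⟨k⁻¹ • r.1, hline⟩,
      quot_mk_grel_eq_iff.mpr (grel_iff_exists_smul.mpr ⟨k⁻¹, H.inv_mem hk, rfl⟩)⟩

theorem GVertex_degree_general (H : Subgroup Fˣ) (v : GVertex F H) :
    #{w : GVertex F H | GAdj H v w} = #F := by
  obtain ⟨p, rfl⟩ := Quot.exists_rep v
  obtain ⟨e⟩ := nonempty_preimage_singleton_equiv_of_finrank_eq_succ (n := 1) (by simp)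
    (dotForm_ne_zero p.2) 1
  rw [← range_normalizedVertex, Cardinal.mk_range_eq _ (normalizedVertex_injective p.1)]
  exact Cardinal.mk_congr (e.trans (Equiv.funUnique (Fin 1) F))

end Graph

/-- Every vertex of `G(q,t)` has at least `q−1` neighbors; more precisely, the number of
vertices adjacent to any given vertex is either `q` or `q−1`. -/
theorem GVertex_degree {q t : ℕ} (hq : IsPrimePow q) (ht : t ∣ q - 1)
    {F : Type} [Field F] [Fintype F] (hF : Fintype.card F = q)
    (H : Subgroup Fˣ) (hH : Nat.card H = t) (v : GVertex F H) :
    q - 1 ≤ {w : GVertex F H | GAdj H v w}.ncard ∧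
      ({w : GVertex F H | GAdj H v w}.ncard = q ∨
        {w : GVertex F H | GAdj H v w}.ncard = q - 1) := by
  have hcard : {w : GVertex F H | GAdj H v w}.ncard = q := by
    rw [← Nat.card_coe_set_eq, Nat.card, GVertex_degree_general, Cardinal.mk_fintype, hF,
      Cardinal.toNat_natCast]
  exact ⟨hcard ▸ Nat.sub_le _ _, Or.inl hcard⟩
end

section
/- For an odd prime power q, the graph G(q², q+1) has exactly (q⁵ − q⁴ + q³ − 2q² + 1)/2 edges. -/
/-- The edge set of the graph `G(q,t)`: unordered pairs of distinct adjacent vertices. -/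
def GEdges (F : Type) [Field F] (H : Subgroup Fˣ) : Set (Sym2 (GVertex F H)) :=
  {e | ∃ u v : GVertex F H, e = s(u, v) ∧ u ≠ v ∧ GAdj H u v}

/-!
Project the nonzero vectors of `F × F` onto the vertices: `H` acts freely on them, so every fibre
has `|H|` elements and counts of vertices become counts of vectors divided by `|H|`. There are
`(|F|² - 1) / |H|` vertices. For `p ≠ 0` the linear form `⟨p, ·⟩` takes a value in `H` on
`|H| |F|` vectors, so each vertex has `|F|` neighbours, counting itself if it carries a loop.
If `i² = -1`, then `a² + b² = (a + ib)(a - ib)` is a hyperbolic form, which takes each nonzero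
value `|F| - 1` times, so there are `|F| - 1` loops. The handshake lemma now gives the number of
edges.
-/

section Fibration

variable {α β γ A B : Type*}

lemma card_preimage_eq_mul_of_fiber_equiv (f : α → β) (S : Set β)
    (hf : ∀ b ∈ S, Nonempty ({a // f a = b} ≃ γ)) : Nat.card (f ⁻¹' S) = Nat.card S * Nat.card γ :=
  calc
    Nat.card (f ⁻¹' S) = Nat.card (Σ b : S, {a // f a = b}) :=
      Nat.card_congr (Equiv.sigmaSubtypeFiberEquivSubtype f fun _ ↦ Iff.rfl).symm
    _ = Nat.card (S × γ) := Nat.card_congr <|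
      (Equiv.sigmaCongrRight fun b : S ↦ (hf b b.2).some).trans (.sigmaEquivProd S γ)
    _ = Nat.card S * Nat.card γ := Nat.card_prod ..

lemma card_preimage_mul_card_codomain [AddGroup A] [AddGroup B] {f : A →+ B}
    (hf : Function.Surjective f) (S : Set B) :
    Nat.card (f ⁻¹' S) * Nat.card B = Nat.card S * Nat.card A := by
  have card_preimage (T : Set B) : Nat.card (f ⁻¹' T) = Nat.card T * Nat.card f.ker :=
    card_preimage_eq_mul_of_fiber_equiv f T fun b _ ↦ ⟨f.fiberEquivKerOfSurjective hf b⟩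
  have card_domain : Nat.card A = Nat.card B * Nat.card f.ker := by
    simpa using card_preimage Set.univ
  rw [card_preimage, card_domain]
  ring

end Fibration

section SumOfSquares

/-- The points of the hyperbola `u * v = c`, for a unit `c`, parametrised by their first
coordinate. -/
def hyperbolaEquivUnits {M : Type*} [CommMonoid M] (c : Mˣ) :
    {p : M × M // p.1 * p.2 = c} ≃ Mˣ where
  toFun p := .mkOfMulEqOne p.1.1 (p.1.2 * ↑c⁻¹) (by rw [← mul_assoc, p.2, c.mul_inv])
  invFun u := ⟨(u, (u⁻¹ * c : Mˣ)), by simp⟩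
  left_inv p := Subtype.ext <| Prod.ext rfl <| by
    simp [Units.inv_mul_eq_iff_eq_mul, p.2]
  right_inv _ := Units.ext rfl

variable {R : Type*} [CommRing R] [Invertible (2 : R)]

/-- The isotropic coordinates `(a + i b, a - i b)` of `(a, b)`, where `i` is a square root of `-1`;
they turn the sum of two squares into a product. -/
def isotropicCoordinates (i : R) (hi : i * i = -1) : R × R ≃ R × R where
  toFun p := (p.1 + i * p.2, p.1 - i * p.2)
  invFun p := (⅟2 * (p.1 + p.2), ⅟2 * (i * (p.2 - p.1)))
  left_inv p := by
    ext
    · linear_combination p.1 * invOf_mul_self (2 : R)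
    · linear_combination p.2 * invOf_mul_self (2 : R) - 2 * ⅟2 * p.2 * hi
  right_inv p := by
    ext
    · linear_combination p.1 * invOf_mul_self (2 : R) + ⅟2 * (p.2 - p.1) * hi
    · linear_combination p.2 * invOf_mul_self (2 : R) - ⅟2 * (p.2 - p.1) * hi

lemma isotropicCoordinates_fst_mul_snd (i : R) (hi : i * i = -1) (p : R × R) :
    (isotropicCoordinates i hi p).1 * (isotropicCoordinates i hi p).2 =
      p.1 * p.1 + p.2 * p.2 := by
  simp only [isotropicCoordinates, Equiv.coe_fn_mk]
  linear_combination -p.2 * p.2 * hi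

/-- The points of the circle `a² + b² = c`, for a unit `c`, parametrised by their first isotropic
coordinate. -/
def circleEquivUnits (i : R) (hi : i * i = -1) (c : Rˣ) :
    {p : R × R // p.1 * p.1 + p.2 * p.2 = c} ≃ Rˣ :=
  ((isotropicCoordinates i hi).subtypeEquiv fun p ↦ by
    rw [isotropicCoordinates_fst_mul_snd]).trans (hyperbolaEquivUnits c)

end SumOfSquares

section Handshake

variable {V : Type*} {r : V → V → Prop}

open Classical in
lemma degree_fromRel_add_ite_self [Fintype V] [Std.Symm r] (u : V) :
    (SimpleGraph.fromRel r).degree u + (if r u u then 1 else 0) = Nat.card {v // r u v} := by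
  have neighborFinset_eq :
      (SimpleGraph.fromRel r).neighborFinset u = (Finset.univ.filter (r u)).erase u := by
    ext v
    simp [SimpleGraph.fromRel_adj, comm_of r (a := v), eq_comm]
  rw [← SimpleGraph.card_neighborFinset_eq_degree, neighborFinset_eq, Nat.card_eq_fintype_card,
    Fintype.card_subtype]
  split_ifs with loop
  · exact Finset.card_erase_add_one (by simpa using loop)
  · rw [Finset.erase_eq_of_notMem (by simpa using loop), add_zero]

lemma two_mul_ncard_edgeSet_fromRel_add_card_loops [Finite V] [Std.Symm r] {d : ℕ}
    (hd : ∀ u, Nat.card {v // r u v} = d) :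
    2 * (SimpleGraph.fromRel r).edgeSet.ncard + Nat.card {u // r u u} = Nat.card V * d := by
  classical
  have := Fintype.ofFinite V
  calc
    _ = ∑ u, (SimpleGraph.fromRel r).degree u + ∑ u, if r u u then 1 else 0 := by
      rw [SimpleGraph.sum_degrees_eq_twice_card_edges, ← SimpleGraph.coe_edgeFinset,
        Set.ncard_coe_finset, Nat.card_eq_fintype_card, Fintype.card_subtype, Finset.card_filter]
    _ = ∑ _u : V, d := by
      simp_rw [← Finset.sum_add_distrib, degree_fromRel_add_ite_self, hd]
    _ = Nat.card V * d := by simp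

end Handshake

section Vertices

lemma smul_nonzero_injective {R V : Type*} [Ring R] [IsCancelMulZero R] [AddCommGroup V]
    [Module R V] [Module.IsTorsionFree R V] (H : Subgroup Rˣ) (v : {v : V // v ≠ 0}) :
    Function.Injective fun h : H ↦ h • v := fun _ _ hsmul ↦
  Subtype.ext <| Units.ext <| smul_left_injective R v.2 (congrArg Subtype.val hsmul)

variable {F : Type} [Field F] (H : Subgroup Fˣ)

lemma Grel_iff_mem_orbit (p p' : {p : F × F // p ≠ 0}) :
    Grel H p p' ↔ p ∈ MulAction.orbit H p' := by
  simp [Grel, MulAction.mem_orbit_iff, Subtype.ext_iff, Prod.ext_iff, Subgroup.smul_def,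
    Units.smul_def, eq_comm, and_left_comm]

lemma mk_Grel_eq_iff (p p' : {p : F × F // p ≠ 0}) :
    Quot.mk (Grel H) p = Quot.mk (Grel H) p' ↔ p ∈ MulAction.orbit H p' := by
  have Grel_eq : Grel H = (MulAction.orbitRel H {p : F × F // p ≠ 0}).r := by
    ext p p'
    exact Grel_iff_mem_orbit H p p'
  rw [Quot.eq, Grel_eq, (MulAction.orbitRel H _).iseqv.eqvGen_iff]
  rfl

lemma nonempty_fiber_mk_Grel_equiv (u : GVertex F H) :
    Nonempty ({p // Quot.mk (Grel H) p = u} ≃ H) := by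
  obtain ⟨p, rfl⟩ := Quot.mk_surjective u
  exact ⟨((Equiv.refl _).subtypeEquiv fun p' ↦ mk_Grel_eq_iff H p' p).trans
    (Equiv.ofInjective _ (smul_nonzero_injective H p)).symm⟩

lemma card_subtype_mk_Grel (P : GVertex F H → Prop) :
    Nat.card {p // P (Quot.mk (Grel H) p)} = Nat.card {u // P u} * Nat.card H :=
  card_preimage_eq_mul_of_fiber_equiv (Quot.mk (Grel H)) {u | P u} fun u _ ↦
    nonempty_fiber_mk_Grel_equiv H u

instance [Finite F] : Finite (GVertex F H) := inferInstanceAs (Finite (Quot (Grel H)))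

lemma card_GVertex_mul_card [Fintype F] :
    Nat.card (GVertex F H) * Nat.card H = Fintype.card F ^ 2 - 1 := by
  classical
  have card_nonzero := card_subtype_mk_Grel H fun _ ↦ True
  simpa [Nat.card_eq_fintype_card, sq] using card_nonzero.symm

end Vertices

section Adjacency

variable {F : Type} [Field F] (H : Subgroup Fˣ)

lemma card_memH : Nat.card {x | memH H x} = Nat.card H :=
  Nat.card_image_of_injective Units.val_injective (H : Set Fˣ)

lemma memH_units_mul_iff {h : Fˣ} (hh : h ∈ H) (x : F) : memH H (h * x) ↔ memH H x := by
  constructor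
  · rintro ⟨k, hk, hx⟩
    exact ⟨h⁻¹ * k, H.mul_mem (H.inv_mem hh) hk, by simp [hx]⟩
  · rintro ⟨k, hk, rfl⟩
    exact ⟨h * k, H.mul_mem hh hk, rfl⟩

lemma not_memH_zero : ¬ memH H 0 := fun ⟨h, _, h0⟩ ↦ h.ne_zero h0

lemma card_nonzero_memH {V : Type*} [Zero V] {f : V → F} (hf : f 0 = 0) :
    Nat.card {v : {v : V // v ≠ 0} // memH H (f v)} = Nat.card (f ⁻¹' {x | memH H x}) :=
  Nat.card_congr <| Equiv.subtypeSubtypeEquivSubtype (q := fun v ↦ memH H (f v)) fun hv h0 ↦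
    not_memH_zero H (by rwa [h0, hf] at hv)

lemma card_nonzero_memH_linearMap {V : Type*} [AddCommGroup V] [Module F V] {φ : V →ₗ[F] F}
    (hφ : φ ≠ 0) :
    Nat.card {v : {v : V // v ≠ 0} // memH H (φ v)} * Nat.card F = Nat.card H * Nat.card V := by
  rw [card_nonzero_memH H φ.map_zero, ← card_memH H]
  exact card_preimage_mul_card_codomain (f := φ.toAddMonoidHom) (LinearMap.surjective hφ) _

lemma GAdj_mk_iff (p p' : {p : F × F // p ≠ 0}) :
    GAdj H (Quot.mk _ p) (Quot.mk _ p') ↔ memH H (p.1.1 * p'.1.1 + p.1.2 * p'.1.2) := by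
  refine ⟨?_, fun h ↦ ⟨p, p', rfl, rfl, h⟩⟩
  rintro ⟨s, s', hs, hs', hmem⟩
  obtain ⟨h, rfl⟩ := (mk_Grel_eq_iff H _ _).1 hs
  obtain ⟨h', rfl⟩ := (mk_Grel_eq_iff H _ _).1 hs'
  rw [← memH_units_mul_iff H h'.2, ← memH_units_mul_iff H h.2] at hmem
  convert hmem using 1
  simp only [Subgroup.smul_def, Units.smul_coe, Units.smul_def, Prod.smul_fst, Prod.smul_snd,
    smul_eq_mul]
  ring

instance : Std.Symm (GAdj H) where
  symm := by
    rintro u v ⟨p, p', hu, hv, h⟩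
    exact ⟨p', p, hv, hu, by rwa [mul_comm p'.1.1, mul_comm p'.1.2]⟩

lemma GEdges_eq_edgeSet_fromRel : GEdges F H = (SimpleGraph.fromRel (GAdj H)).edgeSet := by
  ext e
  constructor
  · rintro ⟨u, v, rfl, hne, h⟩
    exact ⟨hne, .inl h⟩
  · induction e with
    | _ u v =>
      rintro ⟨hne, h | h⟩
      · exact ⟨u, v, rfl, hne, h⟩
      · exact ⟨u, v, rfl, hne, symm_of (GAdj H) h⟩

end Adjacency

section Counting

variable {F : Type} [Field F] [Finite F] (H : Subgroup Fˣ)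

lemma card_subtype_GAdj (u : GVertex F H) : Nat.card {v // GAdj H u v} = Nat.card F := by
  obtain ⟨p, rfl⟩ := Quot.mk_surjective u
  let φ : F × F →ₗ[F] F := (LinearMap.mulLeft F p.1.1).coprod (LinearMap.mulLeft F p.1.2)
  have hφ : φ ≠ 0 := fun h ↦ p.2 <| Prod.ext
    (by simpa [φ] using LinearMap.congr_fun h (1, 0))
    (by simpa [φ] using LinearMap.congr_fun h (0, 1))
  have card_lift : Nat.card {p' : {p : F × F // p ≠ 0} // memH H (φ p')} =
      Nat.card {v // GAdj H (Quot.mk _ p) v} * Nat.card H := by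
    rw [← card_subtype_mk_Grel H]
    simp [GAdj_mk_iff, φ]
  have card_vectors := card_nonzero_memH_linearMap H hφ
  rw [card_lift, Nat.card_prod] at card_vectors
  refine Nat.eq_of_mul_eq_mul_right (mul_pos Nat.card_pos Nat.card_pos :
    0 < Nat.card H * Nat.card F) ?_
  linear_combination card_vectors

lemma card_subtype_GAdj_self (h2 : (2 : F) ≠ 0) (hsq : IsSquare (-1 : F)) :
    Nat.card {u // GAdj H u u} = Nat.card Fˣ := by
  obtain ⟨i, hi⟩ := hsq
  have := invertibleOfNonzero h2
  let Q : F × F → F := fun p ↦ p.1 * p.1 + p.2 * p.2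
  have fiber_equiv : ∀ c ∈ {x | memH H x}, Nonempty ({p // Q p = c} ≃ Fˣ) := by
    rintro _ ⟨c, -, rfl⟩
    exact ⟨circleEquivUnits i hi.symm c⟩
  have card_lift : Nat.card {u // GAdj H u u} * Nat.card H = Nat.card Fˣ * Nat.card H :=
    calc
      _ = Nat.card {p : {p : F × F // p ≠ 0} // memH H (Q p)} := by
        rw [← card_subtype_mk_Grel H]
        simp_rw [GAdj_mk_iff, Q]
      _ = Nat.card (Q ⁻¹' {x | memH H x}) := card_nonzero_memH H (by simp [Q])
      _ = Nat.card H * Nat.card Fˣ := by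
        rw [card_preimage_eq_mul_of_fiber_equiv Q _ fiber_equiv, card_memH]
      _ = Nat.card Fˣ * Nat.card H := mul_comm ..
  exact Nat.eq_of_mul_eq_mul_right Nat.card_pos card_lift

end Counting

theorem GEdges_card_odd_general {F : Type} [Field F] [Fintype F] (hF : Fintype.card F % 4 = 1)
    (H : Subgroup Fˣ) :
    (2 * ((GEdges F H).ncard : ℤ) + (Fintype.card F - 1)) * Nat.card H =
      Fintype.card F * ((Fintype.card F : ℤ) ^ 2 - 1) := by
  have two_ne_zero : (2 : F) ≠ 0 := Ring.two_ne_zero fun h ↦ by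
    have := FiniteField.even_card_of_char_two h
    omega
  have isSquare_neg_one : IsSquare (-1 : F) := FiniteField.isSquare_neg_one_iff.2 (by omega)
  have card_vertices := card_GVertex_mul_card H
  have handshake := two_mul_ncard_edgeSet_fromRel_add_card_loops (card_subtype_GAdj H)
  rw [← GEdges_eq_edgeSet_fromRel, card_subtype_GAdj_self H two_ne_zero isSquare_neg_one,
    Nat.card_units, Nat.card_eq_fintype_card (α := F)] at handshake
  zify [Fintype.card_pos (α := F), Nat.one_le_pow] at card_vertices handshake
  linear_combination (Nat.card H : ℤ) * handshake + (Fintype.card F : ℤ) * card_vertices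

/-- For an odd prime power `q`, the graph `G(q², q+1)` has exactly
`(q⁵ − q⁴ + q³ − 2q² + 1)/2` edges. -/
theorem GEdges_card_odd {q : ℕ} (hq : IsPrimePow q) (hodd : Odd q)
    {F : Type} [Field F] [Fintype F] (hF : Fintype.card F = q ^ 2)
    (H : Subgroup Fˣ) (hH : Nat.card H = q + 1) :
    2 * ((GEdges F H).ncard : ℤ) =
      (q : ℤ) ^ 5 - (q : ℤ) ^ 4 + (q : ℤ) ^ 3 - 2 * (q : ℤ) ^ 2 + 1 := by
  have card_mod_four : Fintype.card F % 4 = 1 := by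
    rw [hF]
    exact_mod_cast Int.sq_mod_four_eq_one_of_odd (x := q) (mod_cast hodd)
  have general := GEdges_card_odd_general card_mod_four H
  rw [hF, hH] at general
  push_cast at general
  refine mul_right_cancel₀ (b := (q + 1 : ℤ)) (by positivity) ?_
  linear_combination general
end
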